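/- Let M = 2N with N ≥ 1, let k ∈ {0,…,N−1}, and let U be any 2×2 unitary complex matrix. Then there exist reals r, s ≥ 0 with r² + s² = 1, ε ∈ {−1, 1}, and real numbers γ, μ₁, θ₁, χ₁, μ₂, θ₂, χ₂ such that, defining for i ∈ {1,2} the M×M diagonal matrix E_i with entries (E_i)_{l,l} = exp(i·(μ_i·sin(2πl/M + θ_i) + χ_i)) for l ∈ {0,…,M−1}, and the diagonal matrix D with D_{j,j} = e^{iγ}·(r + ε·i·s·(−1)^j), the reduced 2×2 matrix satisfies W_k(E₂·(F·D·F†)·E₁) = U. (Exact synthesis, with unit fidelity and unit success probability, of an arbitrary single-qubit unitary on time-bin qubit k in the [EPE] configuration with single-tone RF driving of the electro-optic modulators.) -/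

import Mathlib

/-!
Since `D` takes only two values, according to the parity of `j`, the product `F D F†` is supported
on the pairs of modes that are equal or differ by `N`: on the pair `{k, k + N}` it is
`e^{iγ} [[r, εis], [εis, r]]` (`dft_conj_diag`, `dft_conj_offdiag`), the only sum needed being
`∑ (-1)^j = 0`. A single tone takes opposite values at modes `k` and `k + N`, because the sine
changes sign under a shift by half a period; with `θ = π/2 - 2πk/M` the two phases are `χ + μ` and
`χ - μ`, hence arbitrary (`tone_left`, `tone_right`). It remains to write a unitary as
`[[r e^{iA}, i s e^{iB}], [i s e^{iC}, r e^{i(B+C-A)}]]` (`unitary_param`), which factors as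
diagonal phases times `[[r, is], [is, r]]` times diagonal phases.
-/

open Matrix Complex

/-- The discrete Fourier transform matrix `F` with entries
`F_{k,j} = exp(2πi·k·j/M)/√M`. -/
noncomputable def dftM (M : ℕ) : Matrix (Fin M) (Fin M) ℂ :=
  fun k j => Complex.exp (2 * (Real.pi : ℂ) * Complex.I * ((k : ℕ) : ℂ) * ((j : ℕ) : ℂ) / (M : ℂ))
    / ((Real.sqrt M : ℝ) : ℂ)

/-- The pulse-shaper diagonal matrix `D` with `D_{j,j} = e^{iγ}·(r + ε·i·s·(−1)^j)`. -/
noncomputable def Dmat (N : ℕ) (γ r s ε : ℝ) : Matrix (Fin (2*N)) (Fin (2*N)) ℂ :=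
  Matrix.diagonal (fun j => Complex.exp (Complex.I * (γ : ℂ)) *
    ((r : ℂ) + (ε : ℂ) * Complex.I * (s : ℂ) * (-1 : ℂ) ^ (j : ℕ)))

/-- The reduced 2×2 matrix `W_k(V)` on the qubit subspace spanned by modes `k` and `k+N`. -/
noncomputable def Wk {N : ℕ} (V : Matrix (Fin (2*N)) (Fin (2*N)) ℂ) (k : Fin N) :
    Matrix (Fin 2) (Fin 2) ℂ :=
  !![V ⟨(k : ℕ), by have h := k.isLt; omega⟩ ⟨(k : ℕ), by have h := k.isLt; omega⟩,
     V ⟨(k : ℕ), by have h := k.isLt; omega⟩ ⟨(k : ℕ) + N, by have h := k.isLt; omega⟩;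
     V ⟨(k : ℕ) + N, by have h := k.isLt; omega⟩ ⟨(k : ℕ), by have h := k.isLt; omega⟩,
     V ⟨(k : ℕ) + N, by have h := k.isLt; omega⟩ ⟨(k : ℕ) + N, by have h := k.isLt; omega⟩]

/-- Fidelity `F(W,T) = Tr(W†T)·Tr(T†W)/(Tr(W†W)·Tr(T†T))`. -/
noncomputable def fid (W T : Matrix (Fin 2) (Fin 2) ℂ) : ℂ :=
  (Wᴴ * T).trace * (Tᴴ * W).trace / ((Wᴴ * W).trace * (Tᴴ * T).trace)

/-- Success probability `P(W,T) = Tr(W†W)/Tr(T†T)`. -/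
noncomputable def sProb (W T : Matrix (Fin 2) (Fin 2) ℂ) : ℂ :=
  (Wᴴ * W).trace / (Tᴴ * T).trace

/-- `Z(φ) = [[e^{iφ},0],[0,e^{−iφ}]]`. -/
noncomputable def Zmat (φ : ℝ) : Matrix (Fin 2) (Fin 2) ℂ :=
  !![Complex.exp (Complex.I * (φ : ℂ)), 0; 0, Complex.exp (-(Complex.I * (φ : ℂ)))]

/-- `B(θ) = [[cos θ, i·sin θ],[i·sin θ, cos θ]]`. -/
noncomputable def Bmat (θ : ℝ) : Matrix (Fin 2) (Fin 2) ℂ :=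
  !![(Real.cos θ : ℂ), Complex.I * (Real.sin θ : ℂ);
     Complex.I * (Real.sin θ : ℂ), (Real.cos θ : ℂ)]

/-- The Hadamard matrix. -/
noncomputable def Hmat : Matrix (Fin 2) (Fin 2) ℂ :=
  ((1 / Real.sqrt 2 : ℝ) : ℂ) • !![1, 1; 1, -1]

/-- Unit rows and columns force equal moduli on the diagonal and equal moduli off it. When neither
modulus vanishes, orthogonality of the two rows determines the fourth phase from the other three;
otherwise the phases of the vanishing entries are free. -/
lemma unitary_param (U : Matrix (Fin 2) (Fin 2) ℂ) (hU : U ∈ Matrix.unitaryGroup (Fin 2) ℂ) :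
    ∃ r s A B C : ℝ, 0 ≤ r ∧ 0 ≤ s ∧ r ^ 2 + s ^ 2 = 1 ∧
      U 0 0 = r * exp (I * A) ∧ U 0 1 = I * s * exp (I * B) ∧
      U 1 0 = I * s * exp (I * C) ∧ U 1 1 = r * exp (I * (B + C - A)) := by
  have h1 := Matrix.mem_unitaryGroup_iff.mp hU
  have h2 := Matrix.mem_unitaryGroup_iff'.mp hU
  have e00 := congrFun (congrFun h1 0) 0
  have e01 := congrFun (congrFun h1 0) 1
  have e11 := congrFun (congrFun h1 1) 1
  have f00 := congrFun (congrFun h2 0) 0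
  simp only [Matrix.mul_apply, Fin.sum_univ_two, Matrix.star_apply, Matrix.one_apply_eq,
    RCLike.star_def] at e00 e11 f00
  simp only [Matrix.mul_apply, Fin.sum_univ_two, Matrix.star_apply, RCLike.star_def,
    Matrix.one_apply_ne (show (0 : Fin 2) ≠ 1 by decide)] at e01
  have n00 : ‖U 0 0‖ ^ 2 + ‖U 0 1‖ ^ 2 = 1 := by
    rw [Complex.mul_conj', Complex.mul_conj'] at e00; exact_mod_cast e00
  have n11 : ‖U 1 0‖ ^ 2 + ‖U 1 1‖ ^ 2 = 1 := by
    rw [Complex.mul_conj', Complex.mul_conj'] at e11; exact_mod_cast e11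
  have m00 : ‖U 0 0‖ ^ 2 + ‖U 1 0‖ ^ 2 = 1 := by
    rw [Complex.conj_mul', Complex.conj_mul'] at f00; exact_mod_cast f00
  have hbc : ‖U 1 0‖ = ‖U 0 1‖ :=
    (sq_eq_sq₀ (norm_nonneg _) (norm_nonneg _)).mp (by linarith)
  have had : ‖U 1 1‖ = ‖U 0 0‖ :=
    (sq_eq_sq₀ (norm_nonneg _) (norm_nonneg _)).mp (by linarith)
  have polar : ∀ z : ℂ, z = ‖z‖ * exp (I * z.arg) := fun z => by
    rw [mul_comm I]; exact (Complex.norm_mul_exp_arg_mul_I z).symm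
  have polarI : ∀ z : ℂ, z = I * ‖z‖ * exp (I * (-I * z).arg) := fun z => by
    have h := polar (-I * z)
    rw [norm_mul, norm_neg, Complex.norm_I, one_mul] at h
    rw [mul_assoc, ← h, ← mul_assoc]; simp
  by_cases hs : ‖U 0 1‖ = 0
  · -- for a diagonal unitary the off-diagonal phases are free, and are used to reach `U 1 1`
    refine ⟨‖U 0 0‖, ‖U 0 1‖, (U 0 0).arg, (U 1 1).arg, (U 0 0).arg, norm_nonneg _,
      norm_nonneg _, n00, polar _, ?_, ?_, ?_⟩
    · rw [norm_eq_zero.mp hs]; simp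
    · rw [norm_eq_zero.mp (hbc.trans hs), hs]; simp
    · rw [add_sub_cancel_right, ← had]; exact polar _
  · refine ⟨‖U 0 0‖, ‖U 0 1‖, (U 0 0).arg, (-I * U 0 1).arg, (-I * U 1 0).arg, norm_nonneg _,
      norm_nonneg _, n00, polar _, polarI _, by rw [← hbc]; exact polarI _, ?_⟩
    have ha := polar (U 0 0)
    have hb := polarI (U 0 1)
    have hc := polarI (U 1 0)
    rw [hbc] at hc
    set r := ‖U 0 0‖
    set s := ‖U 0 1‖
    set A := (U 0 0).arg
    set B := (-I * U 0 1).arg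
    set C := (-I * U 1 0).arg
    have hs' : (s : ℂ) ≠ 0 := by exact_mod_cast hs
    -- the conjugate of the orthogonality relation of the two rows
    have e := congrArg (starRingEnd ℂ) e01
    rw [ha, hb, hc] at e
    simp only [map_add, map_mul, Complex.conj_conj, Complex.conj_ofReal, Complex.conj_I,
      map_neg, neg_neg, ← Complex.exp_conj, map_zero] at e
    have hB : exp (-I * B) * exp (I * B) = 1 := by rw [← Complex.exp_add]; simp
    have hE : exp (I * (B + C - A)) = exp (-I * A) * exp (I * C) * exp (I * B) := by
      rw [← Complex.exp_add, ← Complex.exp_add]; congr 1; ring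
    rw [hE]
    have : (I * s) * (U 1 1 - r * (exp (-I * A) * exp (I * C) * exp (I * B))) = 0 := by
      linear_combination (-exp (I * B)) * e - I * s * U 1 1 * hB
    rcases mul_eq_zero.mp this with h | h
    · simp [hs] at h
    · exact sub_eq_zero.mp h

lemma sum_neg_one_pow_even (N : ℕ) : ∑ j : Fin (2 * N), (-1 : ℂ) ^ (j : ℕ) = 0 := by
  rw [Fin.sum_univ_eq_sum_range (fun j => (-1 : ℂ) ^ j), neg_one_geom_sum]
  simp

lemma dft_mul_conj (M : ℕ) (a b j : Fin M) :
    dftM M a j * star (dftM M b j) =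
      exp (2 * Real.pi * I * ((a : ℕ) - (b : ℕ)) * (j : ℕ) / M) / M := by
  have hM : ((Real.sqrt M : ℝ) : ℂ) * ((Real.sqrt M : ℝ) : ℂ) = M := by
    rw [← Complex.ofReal_mul, Real.mul_self_sqrt (Nat.cast_nonneg _)]; simp
  simp only [dftM, RCLike.star_def, map_div₀, ← Complex.exp_conj, map_mul, Complex.conj_ofReal,
    Complex.conj_I, map_natCast, map_ofNat]
  rw [div_mul_div_comm, hM, ← Complex.exp_add]
  congr 2; ring

lemma dft_conj_apply (N : ℕ) (γ r s ε : ℝ) (a b : Fin (2 * N)) :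
    (dftM (2 * N) * Dmat N γ r s ε * (dftM (2 * N))ᴴ) a b =
      ∑ j : Fin (2 * N), exp (I * γ) * (r + ε * I * s * (-1) ^ (j : ℕ)) *
        (dftM (2 * N) a j * star (dftM (2 * N) b j)) := by
  rw [Matrix.mul_apply]
  simp only [Dmat, Matrix.mul_diagonal, Matrix.conjTranspose_apply]
  exact Finset.sum_congr rfl fun j _ => by ring

lemma dft_conj_diag (N : ℕ) (hN : 1 ≤ N) (γ r s ε : ℝ) (a : Fin (2 * N)) :
    (dftM (2 * N) * Dmat N γ r s ε * (dftM (2 * N))ᴴ) a a = exp (I * γ) * r := by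
  have hM : (N : ℂ) ≠ 0 := by exact_mod_cast (by omega : N ≠ 0)
  simp only [dft_conj_apply, dft_mul_conj, sub_self, mul_zero, zero_mul, zero_div,
    Complex.exp_zero]
  rw [← Finset.sum_mul, ← Finset.mul_sum, Finset.sum_add_distrib, ← Finset.mul_sum,
    sum_neg_one_pow_even]
  simp; field_simp

lemma dft_conj_offdiag (N : ℕ) (hN : 1 ≤ N) (γ r s ε : ℝ) (a b : Fin (2 * N))
    (hab : (a : ℕ) = b + N ∨ (b : ℕ) = a + N) :
    (dftM (2 * N) * Dmat N γ r s ε * (dftM (2 * N))ᴴ) a b = exp (I * γ) * (ε * I * s) := by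
  have hM : (N : ℂ) ≠ 0 := by exact_mod_cast (by omega : N ≠ 0)
  -- a shift by half the period turns the Fourier character into the parity character
  have key : ∀ j : Fin (2 * N), dftM (2 * N) a j * star (dftM (2 * N) b j) =
      (-1) ^ (j : ℕ) / ((2 * N : ℕ) : ℂ) := by
    intro j
    rw [dft_mul_conj]
    congr 1
    rcases hab with h | h
    · rw [← Complex.exp_pi_mul_I, ← Complex.exp_nat_mul, h]
      congr 1; push_cast; field_simp; ring
    · have : exp (-(Real.pi * I)) = -1 := by
        rw [Complex.exp_neg, Complex.exp_pi_mul_I]; norm_num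
      rw [← this, ← Complex.exp_nat_mul, h]
      congr 1; push_cast; field_simp; ring
  have sq : ∀ j : ℕ, ((-1 : ℂ) ^ j) * (-1) ^ j = 1 := fun j => by
    rw [← mul_pow]; simp
  have : ∀ j : Fin (2 * N), exp (I * γ) * (r + ε * I * s * (-1) ^ (j : ℕ)) *
      ((-1) ^ (j : ℕ) / ((2 * N : ℕ) : ℂ)) =
      exp (I * γ) / ((2 * N : ℕ) : ℂ) * (r * (-1) ^ (j : ℕ) + ε * I * s) := fun j => by
    linear_combination exp (I * γ) / ((2 * N : ℕ) : ℂ) * (ε * I * s) * sq j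
  simp only [dft_conj_apply, key, this]
  rw [← Finset.mul_sum, Finset.sum_add_distrib, ← Finset.mul_sum, sum_neg_one_pow_even]
  simp; field_simp

lemma tone_left (x μ χ : ℝ) : μ * Real.sin (x + (Real.pi / 2 - x)) + χ = μ + χ := by
  rw [add_sub_cancel, Real.sin_pi_div_two, mul_one]

lemma tone_right (N k : ℕ) (hN : 1 ≤ N) (μ χ : ℝ) :
    μ * Real.sin (2 * Real.pi * ((k + N : ℕ) : ℝ) / (2 * N)
      + (Real.pi / 2 - 2 * Real.pi * k / (2 * N))) + χ = -μ + χ := by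
  have hM : (N : ℝ) ≠ 0 := by exact_mod_cast (by omega : N ≠ 0)
  have : 2 * Real.pi * ((k + N : ℕ) : ℝ) / (2 * N) + (Real.pi / 2 - 2 * Real.pi * k / (2 * N))
      = Real.pi / 2 + Real.pi := by
    push_cast; field_simp; ring
  rw [this, Real.sin_add_pi, Real.sin_pi_div_two]; ring

/-- exact synthesis of an arbitrary single-qubit unitary on
time-bin qubit `k` in the [EPE] configuration with single-tone RF driving. -/
theorem exact_synthesis_EPE_single_tone (N : ℕ) (hN : 1 ≤ N) (k : Fin N)
    (U : Matrix (Fin 2) (Fin 2) ℂ) (hU : U ∈ Matrix.unitaryGroup (Fin 2) ℂ) :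
    ∃ (r s ε γ μ₁ θ₁ χ₁ μ₂ θ₂ χ₂ : ℝ),
      0 ≤ r ∧ 0 ≤ s ∧ r ^ 2 + s ^ 2 = 1 ∧ (ε = -1 ∨ ε = 1) ∧
      Wk (Matrix.diagonal (fun l : Fin (2*N) =>
            Complex.exp (Complex.I *
              ((μ₂ * Real.sin (2 * Real.pi * (l : ℕ) / (2*N) + θ₂) + χ₂ : ℝ) : ℂ)))
          * (dftM (2*N) * Dmat N γ r s ε * (dftM (2*N))ᴴ)
          * Matrix.diagonal (fun l : Fin (2*N) =>
            Complex.exp (Complex.I *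
              ((μ₁ * Real.sin (2 * Real.pi * (l : ℕ) / (2*N) + θ₁) + χ₁ : ℝ) : ℂ)))) k = U := by
  obtain ⟨r, s, A, B, C, hr, hs, hrs, h00, h01, h10, h11⟩ := unitary_param U hU
  -- the tones give phases `0, B - A` at the input and `A, C` at the output of modes `k, k + N`
  refine ⟨r, s, 1, 0, (A - B) / 2, Real.pi / 2 - 2 * Real.pi * (k : ℕ) / (2 * N), (B - A) / 2,
    (A - C) / 2, Real.pi / 2 - 2 * Real.pi * (k : ℕ) / (2 * N), (A + C) / 2,
    hr, hs, hrs, Or.inr rfl, ?_⟩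
  have q0 : (A - B) / 2 + (B - A) / 2 = 0 := by ring
  have q1 : -((A - B) / 2) + (B - A) / 2 = B - A := by ring
  have p0 : (A - C) / 2 + (A + C) / 2 = A := by ring
  have p1 : -((A - C) / 2) + (A + C) / 2 = C := by ring
  have e1 : exp (I * A) * exp (I * (B - A)) = exp (I * B) := by
    rw [← Complex.exp_add]; congr 1; ring
  have e2 : exp (I * C) * exp (I * (B - A)) = exp (I * (B + C - A)) := by
    rw [← Complex.exp_add]; congr 1; ring
  ext i j
  fin_cases i <;> fin_cases j
  · simp only [Wk, Matrix.diagonal_mul, Matrix.mul_diagonal, tone_left, dft_conj_diag N hN, q0, p0]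
    simp [h00, mul_comm]
  · simp only [Wk, Matrix.diagonal_mul, Matrix.mul_diagonal, tone_left, tone_right N k hN,
      dft_conj_offdiag N hN _ _ _ _ ⟨(k : ℕ), by omega⟩ ⟨(k : ℕ) + N, by omega⟩ (Or.inr rfl),
      q1, p0]
    simp [h01]
    linear_combination I * s * e1
  · simp only [Wk, Matrix.diagonal_mul, Matrix.mul_diagonal, tone_left, tone_right N k hN,
      dft_conj_offdiag N hN _ _ _ _ ⟨(k : ℕ) + N, by omega⟩ ⟨(k : ℕ), by omega⟩ (Or.inl rfl),
      q0, p1]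
    simp [h10, mul_comm]
  · simp only [Wk, Matrix.diagonal_mul, Matrix.mul_diagonal, tone_right N k hN,
      dft_conj_diag N hN, q1, p1]
    simp [h11]
    linear_combination r * e2
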